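/- arXiv:2009.10024 — 4 statements merged into one kernel-verified Lean document; each statement's English description precedes it below -/
import Mathlib

section
/- Let 𝒲₁ and 𝒲₂ be weakly exact structures on an additive category 𝒜, both contained in a weakly exact structure 𝒱 (for instance 𝒱 the maximal exact structure). Define 𝒲₁ + 𝒲₂ to be the class of all kernel–cokernel pairs isomorphic to a Baer sum η₁ + η₂ := ∇_A (η₁ ⊕ η₂) Δ_C where, for some objects A and C, η₁ ∈ 𝒲₁ and η₂ ∈ 𝒲₂ are pairs from A to C. Then: (a) 𝒲₁ + 𝒲₂ is a weakly exact structure on 𝒜; and (b) 𝒲₁ + 𝒲₂ is the join of 𝒲₁ and 𝒲₂, i.e. it contains 𝒲₁ and 𝒲₂ and is contained in every weakly exact structure containing both 𝒲₁ and 𝒲₂. -/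
open CategoryTheory CategoryTheory.Limits ZeroObject

universe w v u

namespace WeaklyExactPaper

section Preamble

variable {C : Type u} [Category.{v} C] [Preadditive C] [HasZeroObject C] [HasBinaryBiproducts C]

/-- `(i, d)` is a kernel–cokernel pair: `i` is a kernel of `d` and `d` is a cokernel of `i`. -/
structure IsKernelCokernelPair {A B Z : C} (i : A ⟶ B) (d : B ⟶ Z) : Prop where
  w : i ≫ d = 0
  isKernel : Nonempty (IsLimit (KernelFork.ofι i w))
  isCokernel : Nonempty (IsColimit (CokernelCofork.ofπ d w))

/-- Isomorphism of composable pairs `(i, d) ≅ (i', d')`. -/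
def PairIso {A B Z A' B' Z' : C} (i : A ⟶ B) (d : B ⟶ Z) (i' : A' ⟶ B') (d' : B' ⟶ Z') : Prop :=
  ∃ (eA : A ≅ A') (eB : B ≅ B') (eZ : Z ≅ Z'),
    i ≫ eB.hom = eA.hom ≫ i' ∧ d ≫ eZ.hom = eB.hom ≫ d'

/-- `f` is a kernel of some morphism. -/
def IsSomeKernel {A B : C} (f : A ⟶ B) : Prop :=
  ∃ (Z : C) (g : B ⟶ Z) (w : f ≫ g = 0), Nonempty (IsLimit (KernelFork.ofι f w))

/-- `g` is a cokernel of some morphism. -/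
def IsSomeCokernel {B Z : C} (g : B ⟶ Z) : Prop :=
  ∃ (A : C) (f : A ⟶ B) (w : f ≫ g = 0), Nonempty (IsColimit (CokernelCofork.ofπ g w))

/-- `f` admits a cokernel. -/
def AdmitsCokernel {A B : C} (f : A ⟶ B) : Prop :=
  ∃ (Z : C) (g : B ⟶ Z) (w : f ≫ g = 0), Nonempty (IsColimit (CokernelCofork.ofπ g w))

/-- `g` admits a kernel. -/
def AdmitsKernel {B Z : C} (g : B ⟶ Z) : Prop :=
  ∃ (A : C) (f : A ⟶ B) (w : f ≫ g = 0), Nonempty (IsLimit (KernelFork.ofι f w))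

/-- A weakly exact structure on an additive category: a class of kernel–cokernel pairs,
closed under isomorphisms of composable pairs and binary direct sums, containing the pairs
`(1_X, X ⟶ 0)` and `(0 ⟶ X, 1_X)`, and satisfying the pushout axiom (E2) and the
pullback axiom (E2)ᵒᵖ. -/
structure WeaklyExactStructure (C : Type u) [Category.{v} C] [Preadditive C]
    [HasZeroObject C] [HasBinaryBiproducts C] where
  W : ∀ ⦃A B Z : C⦄, (A ⟶ B) → (B ⟶ Z) → Prop
  kc_of_mem : ∀ {A B Z : C} {i : A ⟶ B} {d : B ⟶ Z}, W i d → IsKernelCokernelPair i d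
  iso_closed : ∀ {A B Z A' B' Z' : C} {i : A ⟶ B} {d : B ⟶ Z} {i' : A' ⟶ B'} {d' : B' ⟶ Z'},
    W i d → PairIso i d i' d' → W i' d'
  sum_mem : ∀ {A₁ B₁ Z₁ A₂ B₂ Z₂ : C} {i₁ : A₁ ⟶ B₁} {d₁ : B₁ ⟶ Z₁} {i₂ : A₂ ⟶ B₂}
    {d₂ : B₂ ⟶ Z₂}, W i₁ d₁ → W i₂ d₂ → W (biprod.map i₁ i₂) (biprod.map d₁ d₂)
  id_zero_mem : ∀ X : C, W (𝟙 X) (0 : X ⟶ (0 : C))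
  zero_id_mem : ∀ X : C, W (0 : (0 : C) ⟶ X) (𝟙 X)
  pushout_mem : ∀ {A B Z A' : C} {i : A ⟶ B} {d : B ⟶ Z}, W i d → ∀ t : A ⟶ A',
    ∃ (S : C) (g : B ⟶ S) (i' : A' ⟶ S), IsPushout i t g i' ∧ ∃ (Z' : C) (d' : S ⟶ Z'), W i' d'
  pullback_mem : ∀ {A B Z D : C} {i : A ⟶ B} {d : B ⟶ Z}, W i d → ∀ t : D ⟶ Z,
    ∃ (P : C) (p : P ⟶ B) (q : P ⟶ D), IsPullback p q d t ∧ ∃ (A'' : C) (i'' : A'' ⟶ P), W i'' q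

/-- `i` is an admissible monic of `𝒲`. -/
def AdmissibleMonic (𝒲 : WeaklyExactStructure C) {A B : C} (i : A ⟶ B) : Prop :=
  ∃ (Z : C) (d : B ⟶ Z), 𝒲.W i d

/-- `d` is an admissible epic of `𝒲`. -/
def AdmissibleEpic (𝒲 : WeaklyExactStructure C) {B Z : C} (d : B ⟶ Z) : Prop :=
  ∃ (A : C) (i : A ⟶ B), 𝒲.W i d

/-- `(i, d)` is a split kernel–cokernel pair. -/
def IsSplitPair {A B Z : C} (i : A ⟶ B) (d : B ⟶ Z) : Prop :=
  ∃ (X Y : C), PairIso (biprod.inl : X ⟶ X ⊞ Y) (biprod.snd : X ⊞ Y ⟶ Y) i d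

end Preamble

section Statement

variable {C : Type u} [Category.{v} C] [Preadditive C] [HasZeroObject C] [HasBinaryBiproducts C]

/-- `(i₃, d₃)` is a Baer sum of a pair of `𝒲₁` and a pair of `𝒲₂` with the same end terms:
it is obtained from the direct sum pair by a pullback along the diagonal followed by a
pushout along the codiagonal. -/
def IsBaerSum (𝒲₁ 𝒲₂ : WeaklyExactStructure C) {A S Z : C}
    (i₃ : A ⟶ S) (d₃ : S ⟶ Z) : Prop :=
  ∃ (B₁ B₂ : C) (i₁ : A ⟶ B₁) (d₁ : B₁ ⟶ Z) (i₂ : A ⟶ B₂) (d₂ : B₂ ⟶ Z),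
    𝒲₁.W i₁ d₁ ∧ 𝒲₂.W i₂ d₂ ∧
    ∃ (P : C) (p : P ⟶ B₁ ⊞ B₂) (dP : P ⟶ Z) (iP : A ⊞ A ⟶ P) (g : P ⟶ S),
      IsPullback p dP (biprod.map d₁ d₂) (biprod.lift (𝟙 Z) (𝟙 Z)) ∧
      iP ≫ p = biprod.map i₁ i₂ ∧ iP ≫ dP = 0 ∧
      IsPushout iP (biprod.desc (𝟙 A) (𝟙 A)) g i₃ ∧
      g ≫ d₃ = dP ∧ i₃ ≫ d₃ = 0

/-!
Between pairs of a weakly exact structure, a morphism that is `(a, 1)` on the outer terms has a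
pushout as its left square, and one that is `(1, c)` has a pullback as its right square: the
mapping cone of that square is a base or cobase change of a pair of the structure. Morphisms over
`(a, 1)` and `(1, c)` are therefore cocartesian and cartesian, and `η` is a Baer sum of `η₁` and
`η₂` exactly when there is a span `η₁ ⊕ η₂ ← ζ → η` of pairs of `𝒱` whose legs lie over `(1, Δ)`
and `(∇, 1)`. Such spans can be added, pushed out along `a` (because `∇ (a ⊕ a) = a ∇`) and pulled
back along `c` (because `Δ c = (c ⊕ c) Δ`), which gives the closure properties of `𝒲₁ + 𝒲₂`.
Adding a split pair changes nothing, so `𝒲₁` and `𝒲₂` lie in `𝒲₁ + 𝒲₂`; and a Baer sum of pairs of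
`𝒰` lies in `𝒰`.
-/

section KernelsAndSquares

variable {D : Type*} [Category* D]

noncomputable def isLimitKernelForkOfIsPullback [HasZeroMorphisms D] {A B Z B' Z' : D}
    {i : A ⟶ B} {d : B ⟶ Z} {i' : A ⟶ B'} {d' : B' ⟶ Z'} {w' : i' ≫ d' = 0}
    (hi' : IsLimit (KernelFork.ofι i' w')) {g : B ⟶ B'} {c : Z ⟶ Z'}
    (sq : IsPullback g d d' c) (hg : i ≫ g = i') (w : i ≫ d = 0) :
    IsLimit (KernelFork.ofι i w) :=
  have : Mono i' := mono_of_isLimit_fork hi'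
  have : Mono i := mono_of_mono_fac hg
  KernelFork.IsLimit.ofι' i w fun x hx =>
    let l := KernelFork.IsLimit.lift' hi' (x ≫ g) (by
      rw [Category.assoc, sq.w, reassoc_of% hx, zero_comp])
    ⟨l.1, sq.hom_ext (by simpa [hg] using l.2) (by simp [w, hx])⟩

noncomputable def isColimitCokernelCoforkOfIsPushout [HasZeroMorphisms D] {A B Z A' B' : D}
    {i : A ⟶ B} {d : B ⟶ Z} {i' : A' ⟶ B'} {d' : B' ⟶ Z} {w : i ≫ d = 0}
    (hd : IsColimit (CokernelCofork.ofπ d w)) {t : A ⟶ A'} {g : B ⟶ B'}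
    (sq : IsPushout i t g i') (hg : g ≫ d' = d) (w' : i' ≫ d' = 0) :
    IsColimit (CokernelCofork.ofπ d' w') :=
  have : Epi d := epi_of_isColimit_cofork hd
  have : Epi d' := epi_of_epi_fac hg
  CokernelCofork.IsColimit.ofπ' d' w' fun x hx =>
    let l := CokernelCofork.IsColimit.desc' hd (g ≫ x) (by
      rw [reassoc_of% sq.w, hx, comp_zero])
    ⟨l.1, sq.hom_ext (by simpa [reassoc_of% hg] using l.2) (by simp [reassoc_of% w', hx])⟩

theorem isPullback_biprod_fst_desc [Preadditive D] {A' B B' Z : D} [HasBinaryBiproduct B A']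
    {i' : A' ⟶ B'} {d' : B' ⟶ Z} {w' : i' ≫ d' = 0} (hi' : IsLimit (KernelFork.ofι i' w'))
    {d : B ⟶ Z} {g : B ⟶ B'} (hg : g ≫ d' = d) :
    IsPullback biprod.fst (biprod.desc g i') d d' := by
  have : Mono i' := mono_of_isLimit_fork hi'
  have comm : (biprod.fst : B ⊞ A' ⟶ B) ≫ d = biprod.desc g i' ≫ d' := by
    apply biprod.hom_ext' <;> simp [hg, w']
  have exists_fac (s : PullbackCone d d') : ∃ l, l ≫ i' = s.snd - s.fst ≫ g := by
    obtain ⟨l, hl⟩ := KernelFork.IsLimit.lift' hi' (s.snd - s.fst ≫ g) (by simp [hg, s.condition])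
    exact ⟨l, hl⟩
  choose l hl using exists_fac
  refine .of_isLimit' ⟨comm⟩ (PullbackCone.IsLimit.mk comm (fun s => biprod.lift s.fst (l s))
    (fun s => by simp) (fun s => by simp [hl]) (fun s m hm₁ hm₂ => ?_))
  refine biprod.hom_ext _ _ (by simpa using hm₁) ?_
  simp [← cancel_mono i', hl, ← hm₁, ← hm₂, biprod.desc_eq]

theorem isPushout_biprod_inl_lift [Preadditive D] {A B B' Z : D} [HasBinaryBiproduct B' Z]
    {i : A ⟶ B} {d : B ⟶ Z} {w : i ≫ d = 0} (hd : IsColimit (CokernelCofork.ofπ d w))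
    {i' : A ⟶ B'} {g : B ⟶ B'} (hg : i ≫ g = i') :
    IsPushout i' i biprod.inl (biprod.lift g d) := by
  have : Epi d := epi_of_isColimit_cofork hd
  have comm : i' ≫ (biprod.inl : B' ⟶ B' ⊞ Z) = i ≫ biprod.lift g d := by
    apply biprod.hom_ext <;> simp [hg, w]
  have exists_fac (s : PushoutCocone i' i) : ∃ l, d ≫ l = s.inr - g ≫ s.inl := by
    obtain ⟨l, hl⟩ := CokernelCofork.IsColimit.desc' hd (s.inr - g ≫ s.inl)
      (by simp [reassoc_of% hg, s.condition])
    exact ⟨l, hl⟩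
  choose l hl using exists_fac
  refine .of_isColimit' ⟨comm⟩ (PushoutCocone.IsColimit.mk comm (fun s => biprod.desc s.inl (l s))
    (fun s => by simp) (fun s => by simp [hl]) (fun s m hm₁ hm₂ => ?_))
  refine biprod.hom_ext' _ _ (by simpa using hm₁) ?_
  simp [← cancel_epi d, hl, ← hm₁, ← hm₂, biprod.lift_eq]

end KernelsAndSquares

section PairHom

variable {D : Type*} [Category* D]

/-- `a` and `c` are the outer components of some morphism of composable pairs
`(i, d) ⟶ (i', d')`. -/
def PairHom {A B Z A' B' Z' : D} (i : A ⟶ B) (d : B ⟶ Z) (i' : A' ⟶ B') (d' : B' ⟶ Z')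
    (a : A ⟶ A') (c : Z ⟶ Z') : Prop :=
  ∃ b : B ⟶ B', i ≫ b = a ≫ i' ∧ b ≫ d' = d ≫ c

variable {A B Z A' B' Z' : D} {i : A ⟶ B} {d : B ⟶ Z} {i' : A' ⟶ B'} {d' : B' ⟶ Z'}

theorem PairHom.comp {A'' B'' Z'' : D} {i'' : A'' ⟶ B''} {d'' : B'' ⟶ Z''} {a : A ⟶ A'}
    {c : Z ⟶ Z'} {a' : A' ⟶ A''} {c' : Z' ⟶ Z''} (h : PairHom i d i' d' a c)
    (h' : PairHom i' d' i'' d'' a' c') : PairHom i d i'' d'' (a ≫ a') (c ≫ c') := by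
  obtain ⟨b, hi, hd⟩ := h
  obtain ⟨b', hi', hd'⟩ := h'
  exact ⟨b ≫ b', by rw [reassoc_of% hi, hi', Category.assoc],
    by rw [Category.assoc, hd', reassoc_of% hd]⟩

theorem PairHom.biprod_map [HasZeroMorphisms D] [HasBinaryBiproducts D]
    {A₁ B₁ Z₁ A₁' B₁' Z₁' : D} {i₁ : A₁ ⟶ B₁} {d₁ : B₁ ⟶ Z₁}
    {i₁' : A₁' ⟶ B₁'} {d₁' : B₁' ⟶ Z₁'} {a : A ⟶ A'} {c : Z ⟶ Z'} {a₁ : A₁ ⟶ A₁'} {c₁ : Z₁ ⟶ Z₁'}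
    (h : PairHom i d i' d' a c) (h₁ : PairHom i₁ d₁ i₁' d₁' a₁ c₁) :
    PairHom (biprod.map i i₁) (biprod.map d d₁) (biprod.map i' i₁') (biprod.map d' d₁')
      (biprod.map a a₁) (biprod.map c c₁) := by
  obtain ⟨b, hi, hd⟩ := h
  obtain ⟨b₁, hi₁, hd₁⟩ := h₁
  exact ⟨biprod.map b b₁, by apply biprod.hom_ext <;> simp [hi, hi₁],
    by apply biprod.hom_ext <;> simp [hd, hd₁]⟩

end PairHom

section Biproducts

variable {D : Type*} [Category* D] [HasZeroMorphisms D] [HasBinaryBiproducts D]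

theorem biprod_map_id_id (X Y : D) : biprod.map (𝟙 X) (𝟙 Y) = 𝟙 (X ⊞ Y) := by
  cat_disch

/-- The isomorphism exchanging the two middle summands of a fourfold biproduct. -/
@[simps]
noncomputable def biprodInterchange (X Y Z W : D) : (X ⊞ Y) ⊞ (Z ⊞ W) ≅ (X ⊞ Z) ⊞ (Y ⊞ W) where
  hom := biprod.lift (biprod.map biprod.fst biprod.fst) (biprod.map biprod.snd biprod.snd)
  inv := biprod.lift (biprod.map biprod.fst biprod.fst) (biprod.map biprod.snd biprod.snd)

theorem biprod_map_map_interchange {X Y Z W X' Y' Z' W' : D} (f : X ⟶ X') (g : Y ⟶ Y') (h : Z ⟶ Z')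
    (k : W ⟶ W') :
    biprod.map (biprod.map f g) (biprod.map h k) ≫ (biprodInterchange X' Y' Z' W').hom =
      (biprodInterchange X Y Z W).hom ≫ biprod.map (biprod.map f h) (biprod.map g k) := by
  cat_disch

theorem PairHom.interchange {A₁ B₁ Z₁ A₂ B₂ Z₂ A₃ B₃ Z₃ A₄ B₄ Z₄ : D}
    (i₁ : A₁ ⟶ B₁) (d₁ : B₁ ⟶ Z₁) (i₂ : A₂ ⟶ B₂) (d₂ : B₂ ⟶ Z₂)
    (i₃ : A₃ ⟶ B₃) (d₃ : B₃ ⟶ Z₃) (i₄ : A₄ ⟶ B₄) (d₄ : B₄ ⟶ Z₄) :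
    PairHom (biprod.map (biprod.map i₁ i₂) (biprod.map i₃ i₄))
      (biprod.map (biprod.map d₁ d₂) (biprod.map d₃ d₄))
      (biprod.map (biprod.map i₁ i₃) (biprod.map i₂ i₄))
      (biprod.map (biprod.map d₁ d₃) (biprod.map d₂ d₄))
      (biprodInterchange A₁ A₂ A₃ A₄).hom (biprodInterchange Z₁ Z₂ Z₃ Z₄).hom :=
  ⟨(biprodInterchange B₁ B₂ B₃ B₄).hom, biprod_map_map_interchange ..,
    (biprod_map_map_interchange ..).symm⟩

end Biproducts

instance : LE (WeaklyExactStructure C) where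
  le 𝒲 𝒱 := ∀ ⦃A B Z : C⦄ (i : A ⟶ B) (d : B ⟶ Z), 𝒲.W i d → 𝒱.W i d

namespace WeaklyExactStructure

variable {𝒲 : WeaklyExactStructure C} {A B Z A' B' Z' : C}
  {i : A ⟶ B} {d : B ⟶ Z} {i' : A' ⟶ B'} {d' : B' ⟶ Z'}

theorem mem_of_isLimit {A' : C} {i' : A' ⟶ B} (h : 𝒲.W i d) {w : i' ≫ d = 0}
    (hi' : IsLimit (KernelFork.ofι i' w)) : 𝒲.W i' d :=
  let ⟨hi⟩ := (𝒲.kc_of_mem h).isKernel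
  𝒲.iso_closed h ⟨hi.conePointUniqueUpToIso hi', Iso.refl B, Iso.refl Z,
    by simpa using (hi.conePointUniqueUpToIso_hom_comp hi' .zero).symm, by simp⟩

theorem mem_of_isColimit {Z' : C} {d' : B ⟶ Z'} (h : 𝒲.W i d) {w : i ≫ d' = 0}
    (hd' : IsColimit (CokernelCofork.ofπ d' w)) : 𝒲.W i d' :=
  let ⟨hd⟩ := (𝒲.kc_of_mem h).isCokernel
  𝒲.iso_closed h ⟨Iso.refl A, Iso.refl B, hd.coconePointUniqueUpToIso hd', by simp,
    by simpa using hd.comp_coconePointUniqueUpToIso_hom hd' .one⟩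

theorem mem_of_isPullback {i' : A ⟶ B'} (h : 𝒲.W i' d') {g : B ⟶ B'} {c : Z ⟶ Z'}
    (sq : IsPullback g d d' c) (hg : i ≫ g = i') (w : i ≫ d = 0) : 𝒲.W i d := by
  obtain ⟨P, p, q, sq₀, A₀, i₀, h₀⟩ := 𝒲.pullback_mem h c
  have hd : 𝒲.W (i₀ ≫ (sq₀.isoIsPullback _ _ sq).hom) d :=
    𝒲.iso_closed h₀ ⟨Iso.refl A₀, sq₀.isoIsPullback _ _ sq, Iso.refl Z, by simp, by simp⟩
  obtain ⟨hi'⟩ := (𝒲.kc_of_mem h).isKernel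
  exact mem_of_isLimit hd (isLimitKernelForkOfIsPullback hi' sq hg w)

theorem mem_of_isPushout {d' : B' ⟶ Z} (h : 𝒲.W i d) {t : A ⟶ A'} {g : B ⟶ B'}
    (sq : IsPushout i t g i') (hg : g ≫ d' = d) (w : i' ≫ d' = 0) : 𝒲.W i' d' := by
  obtain ⟨S, q, j, sq₀, Z₀, d₀, h₀⟩ := 𝒲.pushout_mem h t
  have hi' : 𝒲.W i' ((sq₀.isoIsPushout _ _ sq).inv ≫ d₀) :=
    𝒲.iso_closed h₀ ⟨Iso.refl A', sq₀.isoIsPushout _ _ sq, Iso.refl Z₀, by simp, by simp⟩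
  obtain ⟨hd⟩ := (𝒲.kc_of_mem h).isCokernel
  exact mem_of_isColimit hi' (isColimitCokernelCoforkOfIsPushout hd sq hg w)

theorem exists_isPullback (h : 𝒲.W i d) (c : Z' ⟶ Z) :
    ∃ (P : C) (p : P ⟶ B) (j : A ⟶ P) (e : P ⟶ Z'),
      IsPullback p e d c ∧ 𝒲.W j e ∧ PairHom j e i d (𝟙 A) c := by
  obtain ⟨P, p, e, sq, -⟩ := 𝒲.pullback_mem h c
  have w : i ≫ d = (0 : A ⟶ Z') ≫ c := by rw [(𝒲.kc_of_mem h).w, zero_comp]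
  exact ⟨P, p, sq.lift i 0 w, e, sq, mem_of_isPullback h sq (by simp) (by simp), p, by simp, sq.w⟩

theorem exists_isPushout (h : 𝒲.W i d) (a : A ⟶ A') :
    ∃ (S : C) (g : B ⟶ S) (j : A' ⟶ S) (e : S ⟶ Z),
      IsPushout i a g j ∧ 𝒲.W j e ∧ PairHom i d j e a (𝟙 Z) := by
  obtain ⟨S, g, j, sq, -⟩ := 𝒲.pushout_mem h a
  have w : i ≫ d = a ≫ (0 : A' ⟶ Z) := by rw [(𝒲.kc_of_mem h).w, comp_zero]
  exact ⟨S, g, j, sq.desc d 0 w, sq, mem_of_isPushout h sq (by simp) (by simp), g, sq.w, by simp⟩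

/-- The mapping cone `(lift i (-t), desc g i')` of the morphism of pairs is the pullback of `(i, d)`
along `d'`, hence belongs to `𝒲`; its right exactness is the pushout property. -/
theorem isPushout_of_mem {d' : B' ⟶ Z} (h : 𝒲.W i d) (h' : IsKernelCokernelPair i' d')
    {t : A ⟶ A'} {g : B ⟶ B'} (hi : i ≫ g = t ≫ i') (hd : g ≫ d' = d) : IsPushout i t g i' := by
  obtain ⟨ker⟩ := h'.isKernel
  have cone_mem : 𝒲.W (biprod.lift i (-t)) (biprod.desc g i') :=
    mem_of_isPullback h (isPullback_biprod_fst_desc ker hd) (by simp) (by simp [hi])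
  obtain ⟨coker⟩ := (𝒲.kc_of_mem cone_mem).isCokernel
  exact ⟨⟨hi⟩, ⟨(CommSq.isColimitEquivIsColimitCokernelCofork ⟨hi⟩).symm coker⟩⟩

theorem isPullback_of_mem {i' : A ⟶ B'} (h' : 𝒲.W i' d') (h : IsKernelCokernelPair i d)
    {g : B ⟶ B'} {c : Z ⟶ Z'} (hi : i ≫ g = i') (hd : g ≫ d' = d ≫ c) : IsPullback g d d' c := by
  obtain ⟨coker⟩ := h.isCokernel
  have cone_mem : 𝒲.W (biprod.lift g d) (biprod.desc d' (-c)) :=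
    mem_of_isPushout h' (isPushout_biprod_inl_lift coker hi) (by simp) (by simp [hd])
  obtain ⟨ker⟩ := (𝒲.kc_of_mem cone_mem).isKernel
  exact ⟨⟨hd⟩, ⟨(CommSq.isLimitEquivIsLimitKernelFork ⟨hd⟩).symm ker⟩⟩

variable {A'' B'' Z'' : C} {i'' : A'' ⟶ B''} {d'' : B'' ⟶ Z''}

theorem pairHom_of_comp_left {d' : B' ⟶ Z} {a : A ⟶ A'} {a' : A' ⟶ A''} {c : Z ⟶ Z''}
    (h : 𝒲.W i d) (h' : IsKernelCokernelPair i' d') (w'' : i'' ≫ d'' = 0)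
    (f : PairHom i d i' d' a (𝟙 Z)) (k : PairHom i d i'' d'' (a ≫ a') c) :
    PairHom i' d' i'' d'' a' c := by
  obtain ⟨b, hi, hd⟩ := f
  obtain ⟨e, ei, ed⟩ := k
  rw [Category.comp_id] at hd
  rw [Category.assoc] at ei
  have sq := isPushout_of_mem h h' hi hd
  refine ⟨sq.desc e (a' ≫ i'') ei, by simp, sq.hom_ext ?_ ?_⟩
  · simp [ed, reassoc_of% hd]
  · simp [w'', reassoc_of% h'.w]

theorem pairHom_of_comp_right {i' : A ⟶ B'} {a : A'' ⟶ A} {c : Z ⟶ Z'} {c' : Z'' ⟶ Z}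
    (h' : 𝒲.W i' d') (h : IsKernelCokernelPair i d) (w'' : i'' ≫ d'' = 0)
    (f : PairHom i d i' d' (𝟙 A) c) (k : PairHom i'' d'' i' d' a (c' ≫ c)) :
    PairHom i'' d'' i d a c' := by
  obtain ⟨b, hi, hd⟩ := f
  obtain ⟨e, ei, ed⟩ := k
  rw [Category.id_comp] at hi
  rw [← Category.assoc] at ed
  have sq := isPullback_of_mem h' h hi hd
  refine ⟨sq.lift e (d'' ≫ c') ed, sq.hom_ext ?_ ?_, by simp⟩
  · simp [ei, hi]
  · simp [reassoc_of% w'', h.w]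

theorem split_mem (𝒲 : WeaklyExactStructure C) (X Y : C) :
    𝒲.W (biprod.inl : X ⟶ X ⊞ Y) (biprod.snd : X ⊞ Y ⟶ Y) :=
  𝒲.iso_closed (𝒲.sum_mem (𝒲.id_zero_mem X) (𝒲.zero_id_mem Y))
    ⟨(isoBiprodZero (isZero_zero C)).symm, Iso.refl _, (isoZeroBiprod (isZero_zero C)).symm,
      by apply biprod.hom_ext' <;> simp, by simp⟩

end WeaklyExactStructure

section BaerSums

open WeaklyExactStructure

variable {𝒱 𝒲₁ 𝒲₂ : WeaklyExactStructure C}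

section BaerSpan

variable {A B₁ B₂ B Z A' B₁' B₂' B' Z' : C}
  {i₁ : A ⟶ B₁} {d₁ : B₁ ⟶ Z} {i₂ : A ⟶ B₂} {d₂ : B₂ ⟶ Z} {i : A ⟶ B} {d : B ⟶ Z}
  {i₁' : A' ⟶ B₁'} {d₁' : B₁' ⟶ Z'} {i₂' : A' ⟶ B₂'} {d₂' : B₂' ⟶ Z'} {i' : A' ⟶ B'} {d' : B' ⟶ Z'}

/-- A pair `(j, e)` of `𝒱` with morphisms to `(i₁, d₁) ⊕ (i₂, d₂)` over `(1, Δ)` and to `(i, d)`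
over `(∇, 1)`. Between pairs of `𝒱` such a span exhibits `(i, d)` as a Baer sum, with the two
universal squares replaced by mere morphisms of pairs. -/
def BaerSpan (𝒱 : WeaklyExactStructure C) (i₁ : A ⟶ B₁) (d₁ : B₁ ⟶ Z) (i₂ : A ⟶ B₂) (d₂ : B₂ ⟶ Z)
    (i : A ⟶ B) (d : B ⟶ Z) : Prop :=
  ∃ (P : C) (j : A ⊞ A ⟶ P) (e : P ⟶ Z), 𝒱.W j e ∧
    PairHom j e (biprod.map i₁ i₂) (biprod.map d₁ d₂) (𝟙 (A ⊞ A)) (biprod.lift (𝟙 Z) (𝟙 Z)) ∧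
    PairHom j e i d (biprod.desc (𝟙 A) (𝟙 A)) (𝟙 Z)

theorem isBaerSum_iff (h₁ : 𝒲₁ ≤ 𝒱) (h₂ : 𝒲₂ ≤ 𝒱) :
    IsBaerSum 𝒲₁ 𝒲₂ i d ↔ 𝒱.W i d ∧
      ∃ (B₁ B₂ : C) (i₁ : A ⟶ B₁) (d₁ : B₁ ⟶ Z) (i₂ : A ⟶ B₂) (d₂ : B₂ ⟶ Z),
        𝒲₁.W i₁ d₁ ∧ 𝒲₂.W i₂ d₂ ∧ BaerSpan 𝒱 i₁ d₁ i₂ d₂ i d := by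
  constructor
  · rintro ⟨B₁, B₂, i₁, d₁, i₂, d₂, hη₁, hη₂, P, p, e, j, g, pb, hjp, hje, po, hge, w⟩
    have hζ : 𝒱.W j e := mem_of_isPullback (𝒱.sum_mem (h₁ _ _ hη₁) (h₂ _ _ hη₂)) pb hjp hje
    exact ⟨mem_of_isPushout hζ po hge w, B₁, B₂, i₁, d₁, i₂, d₂, hη₁, hη₂, P, j, e, hζ,
      ⟨p, by simpa using hjp, pb.w⟩, ⟨g, po.w, by simpa using hge⟩⟩
  · rintro ⟨hη, B₁, B₂, i₁, d₁, i₂, d₂, hη₁, hη₂, P, j, e, hζ, ⟨p, hjp, hpe⟩, ⟨g, hjg, hge⟩⟩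
    have hsum := 𝒱.sum_mem (h₁ _ _ hη₁) (h₂ _ _ hη₂)
    rw [Category.id_comp] at hjp
    rw [Category.comp_id] at hge
    exact ⟨B₁, B₂, i₁, d₁, i₂, d₂, hη₁, hη₂, P, p, e, j, g,
      isPullback_of_mem hsum (𝒱.kc_of_mem hζ) hjp hpe, hjp, (𝒱.kc_of_mem hζ).w,
      isPushout_of_mem hζ (𝒱.kc_of_mem hη) hjg hge, hge, (𝒱.kc_of_mem hη).w⟩

theorem BaerSpan.of_pairHom_left {d₁' : B₁' ⟶ Z} {d₂' : B₂' ⟶ Z} {d' : B' ⟶ Z} {a : A ⟶ A'}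
    (s : BaerSpan 𝒱 i₁ d₁ i₂ d₂ i d) (w₁ : i₁' ≫ d₁' = 0) (w₂ : i₂' ≫ d₂' = 0) (w : i' ≫ d' = 0)
    (k₁ : PairHom i₁ d₁ i₁' d₁' a (𝟙 Z)) (k₂ : PairHom i₂ d₂ i₂' d₂' a (𝟙 Z))
    (k : PairHom i d i' d' a (𝟙 Z)) : BaerSpan 𝒱 i₁' d₁' i₂' d₂' i' d' := by
  obtain ⟨P, j, e, hζ, toSum, toPair⟩ := s
  obtain ⟨P', -, j', e', -, hζ', f⟩ := exists_isPushout hζ (biprod.map a a)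
  have codiag : biprod.map a a ≫ biprod.desc (𝟙 A') (𝟙 A') = biprod.desc (𝟙 A) (𝟙 A) ≫ a := by
    cat_disch
  refine ⟨P', j', e', hζ', pairHom_of_comp_left hζ (𝒱.kc_of_mem hζ') ?_ f ?_,
    pairHom_of_comp_left hζ (𝒱.kc_of_mem hζ') w f ?_⟩
  · cat_disch
  · simpa [biprod_map_id_id] using toSum.comp (k₁.biprod_map k₂)
  · rw [codiag]
    simpa using toPair.comp k

theorem BaerSpan.of_pairHom_right {i₁' : A ⟶ B₁'} {i₂' : A ⟶ B₂'} {i' : A ⟶ B'} {c : Z ⟶ Z'}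
    (s : BaerSpan 𝒱 i₁' d₁' i₂' d₂' i' d') (hη₁ : 𝒱.W i₁ d₁) (hη₂ : 𝒱.W i₂ d₂) (hη : 𝒱.W i d)
    (hη₁' : 𝒱.W i₁' d₁') (hη₂' : 𝒱.W i₂' d₂') (hη' : 𝒱.W i' d')
    (k₁ : PairHom i₁ d₁ i₁' d₁' (𝟙 A) c) (k₂ : PairHom i₂ d₂ i₂' d₂' (𝟙 A) c)
    (k : PairHom i d i' d' (𝟙 A) c) : BaerSpan 𝒱 i₁ d₁ i₂ d₂ i d := by
  obtain ⟨P, j, e, hζ, toSum, toPair⟩ := s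
  obtain ⟨P', -, j', e', -, hζ', f⟩ := exists_isPullback hζ c
  have diag : biprod.lift (𝟙 Z) (𝟙 Z) ≫ biprod.map c c = c ≫ biprod.lift (𝟙 Z') (𝟙 Z') := by
    cat_disch
  have k₁₂ := k₁.biprod_map k₂
  rw [biprod_map_id_id] at k₁₂
  have w' := (𝒱.kc_of_mem hζ').w
  refine ⟨P', j', e', hζ',
    pairHom_of_comp_right (𝒱.sum_mem hη₁' hη₂') (𝒱.kc_of_mem (𝒱.sum_mem hη₁ hη₂)) w' k₁₂ ?_,
    pairHom_of_comp_right hη' (𝒱.kc_of_mem hη) w' k ?_⟩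
  · rw [diag]
    simpa using f.comp toSum
  · simpa using f.comp toPair

theorem BaerSpan.biprod_map (s : BaerSpan 𝒱 i₁ d₁ i₂ d₂ i d)
    (s' : BaerSpan 𝒱 i₁' d₁' i₂' d₂' i' d') :
    BaerSpan 𝒱 (biprod.map i₁ i₁') (biprod.map d₁ d₁') (biprod.map i₂ i₂') (biprod.map d₂ d₂')
      (biprod.map i i') (biprod.map d d') := by
  obtain ⟨P, j, e, hζ, toSum, toPair⟩ := s
  obtain ⟨P', j', e', hζ', toSum', toPair'⟩ := s'
  let σ := biprodInterchange A A' A A'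
  have hσ : 𝒱.W (σ.hom ≫ biprod.map j j') (biprod.map e e') :=
    𝒱.iso_closed (𝒱.sum_mem hζ hζ') ⟨σ.symm, Iso.refl _, Iso.refl _, by simp, by simp⟩
  have f : PairHom (σ.hom ≫ biprod.map j j') (biprod.map e e') (biprod.map j j') (biprod.map e e')
      σ.hom (𝟙 (Z ⊞ Z')) := ⟨𝟙 _, by simp, by simp⟩
  refine ⟨P ⊞ P', σ.hom ≫ biprod.map j j', biprod.map e e', hσ, ?_, ?_⟩
  · convert (f.comp (toSum.biprod_map toSum')).comp (PairHom.interchange ..) using 1 <;> cat_disch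
  · convert f.comp (toPair.biprod_map toPair') using 1 <;> cat_disch

end BaerSpan

section BaerSum

variable {A B Z A' B' Z' : C} {i : A ⟶ B} {d : B ⟶ Z} {i' : A' ⟶ B'} {d' : B' ⟶ Z'}

theorem mem_of_isBaerSum (h₁ : 𝒲₁ ≤ 𝒱) (h₂ : 𝒲₂ ≤ 𝒱) (h : IsBaerSum 𝒲₁ 𝒲₂ i d) : 𝒱.W i d :=
  ((isBaerSum_iff h₁ h₂).mp h).1

theorem IsBaerSum.of_pairHom_left {d' : B' ⟶ Z} {a : A ⟶ A'} (h₁ : 𝒲₁ ≤ 𝒱) (h₂ : 𝒲₂ ≤ 𝒱)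
    (h : IsBaerSum 𝒲₁ 𝒲₂ i d) (hη' : 𝒱.W i' d') (k : PairHom i d i' d' a (𝟙 Z)) :
    IsBaerSum 𝒲₁ 𝒲₂ i' d' := by
  obtain ⟨-, B₁, B₂, i₁, d₁, i₂, d₂, hη₁, hη₂, s⟩ := (isBaerSum_iff h₁ h₂).mp h
  obtain ⟨B₁', -, i₁', d₁', -, hη₁', k₁⟩ := exists_isPushout hη₁ a
  obtain ⟨B₂', -, i₂', d₂', -, hη₂', k₂⟩ := exists_isPushout hη₂ a
  exact (isBaerSum_iff h₁ h₂).mpr ⟨hη', B₁', B₂', i₁', d₁', i₂', d₂', hη₁', hη₂',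
    s.of_pairHom_left (𝒲₁.kc_of_mem hη₁').w (𝒲₂.kc_of_mem hη₂').w (𝒱.kc_of_mem hη').w k₁ k₂ k⟩

theorem IsBaerSum.of_pairHom_right {i' : A ⟶ B'} {c : Z ⟶ Z'} (h₁ : 𝒲₁ ≤ 𝒱) (h₂ : 𝒲₂ ≤ 𝒱)
    (h' : IsBaerSum 𝒲₁ 𝒲₂ i' d') (hη : 𝒱.W i d) (k : PairHom i d i' d' (𝟙 A) c) :
    IsBaerSum 𝒲₁ 𝒲₂ i d := by
  obtain ⟨hη', B₁', B₂', i₁', d₁', i₂', d₂', hη₁', hη₂', s⟩ := (isBaerSum_iff h₁ h₂).mp h'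
  obtain ⟨B₁, -, i₁, d₁, -, hη₁, k₁⟩ := exists_isPullback hη₁' c
  obtain ⟨B₂, -, i₂, d₂, -, hη₂, k₂⟩ := exists_isPullback hη₂' c
  exact (isBaerSum_iff h₁ h₂).mpr ⟨hη, B₁, B₂, i₁, d₁, i₂, d₂, hη₁, hη₂,
    s.of_pairHom_right (h₁ _ _ hη₁) (h₂ _ _ hη₂) hη (h₁ _ _ hη₁') (h₂ _ _ hη₂') hη' k₁ k₂ k⟩

theorem IsBaerSum.of_pairIso (h₁ : 𝒲₁ ≤ 𝒱) (h₂ : 𝒲₂ ≤ 𝒱) (h : IsBaerSum 𝒲₁ 𝒲₂ i d)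
    (φ : PairIso i d i' d') : IsBaerSum 𝒲₁ 𝒲₂ i' d' := by
  have hη := mem_of_isBaerSum h₁ h₂ h
  have hη' := 𝒱.iso_closed hη φ
  obtain ⟨eA, eB, eZ, hi, hd⟩ := φ
  have mid_mem : 𝒱.W (eA.inv ≫ i) d :=
    𝒱.iso_closed hη ⟨eA, Iso.refl B, Iso.refl Z, by simp, by simp⟩
  have mid : IsBaerSum 𝒲₁ 𝒲₂ (eA.inv ≫ i) d :=
    h.of_pairHom_left h₁ h₂ mid_mem (a := eA.hom) ⟨𝟙 B, by simp, by simp⟩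
  refine mid.of_pairHom_right h₁ h₂ hη' (c := eZ.inv) ⟨eB.inv, ?_, ?_⟩
  · simp [← cancel_mono eB.hom, hi]
  · simp [← cancel_epi eB.hom, ← reassoc_of% hd]

theorem IsBaerSum.biprod_map (h₁ : 𝒲₁ ≤ 𝒱) (h₂ : 𝒲₂ ≤ 𝒱) (h : IsBaerSum 𝒲₁ 𝒲₂ i d)
    (h' : IsBaerSum 𝒲₁ 𝒲₂ i' d') : IsBaerSum 𝒲₁ 𝒲₂ (biprod.map i i') (biprod.map d d') := by
  obtain ⟨hη, B₁, B₂, i₁, d₁, i₂, d₂, hη₁, hη₂, s⟩ := (isBaerSum_iff h₁ h₂).mp h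
  obtain ⟨hη', B₁', B₂', i₁', d₁', i₂', d₂', hη₁', hη₂', s'⟩ := (isBaerSum_iff h₁ h₂).mp h'
  exact (isBaerSum_iff h₁ h₂).mpr ⟨𝒱.sum_mem hη hη', _, _, _, _, _, _, 𝒲₁.sum_mem hη₁ hη₁',
    𝒲₂.sum_mem hη₂ hη₂', s.biprod_map s'⟩

theorem isBaerSum_of_mem_left (h₁ : 𝒲₁ ≤ 𝒱) (h₂ : 𝒲₂ ≤ 𝒱) (h : 𝒲₁.W i d) :
    IsBaerSum 𝒲₁ 𝒲₂ i d := by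
  have hsplit := 𝒲₂.split_mem A Z
  obtain ⟨P, -, j, e, -, hζ, toSum⟩ :=
    exists_isPullback (𝒱.sum_mem (h₁ _ _ h) (h₂ _ _ hsplit)) (biprod.lift (𝟙 Z) (𝟙 Z))
  have add_split : PairHom (biprod.map i biprod.inl) (biprod.map d biprod.snd) i d
      (biprod.desc (𝟙 A) (𝟙 A)) (biprod.fst : Z ⊞ Z ⟶ Z) :=
    ⟨biprod.desc (𝟙 B) (biprod.fst ≫ i), by cat_disch,
      by apply biprod.hom_ext' <;> simp [(𝒲₁.kc_of_mem h).w]⟩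
  exact (isBaerSum_iff h₁ h₂).mpr ⟨h₁ _ _ h, B, A ⊞ Z, i, d, biprod.inl, biprod.snd, h, hsplit,
    P, j, e, hζ, toSum, by simpa using toSum.comp add_split⟩

theorem isBaerSum_of_mem_right (h₁ : 𝒲₁ ≤ 𝒱) (h₂ : 𝒲₂ ≤ 𝒱) (h : 𝒲₂.W i d) :
    IsBaerSum 𝒲₁ 𝒲₂ i d := by
  have hsplit := 𝒲₁.split_mem A Z
  obtain ⟨P, -, j, e, -, hζ, toSum⟩ :=
    exists_isPullback (𝒱.sum_mem (h₁ _ _ hsplit) (h₂ _ _ h)) (biprod.lift (𝟙 Z) (𝟙 Z))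
  have split_add : PairHom (biprod.map biprod.inl i) (biprod.map biprod.snd d) i d
      (biprod.desc (𝟙 A) (𝟙 A)) (biprod.snd : Z ⊞ Z ⟶ Z) :=
    ⟨biprod.desc (biprod.fst ≫ i) (𝟙 B), by cat_disch,
      by apply biprod.hom_ext' <;> simp [(𝒲₂.kc_of_mem h).w]⟩
  exact (isBaerSum_iff h₁ h₂).mpr ⟨h₂ _ _ h, A ⊞ Z, B, biprod.inl, biprod.snd, i, d, hsplit, h,
    P, j, e, hζ, toSum, by simpa using toSum.comp split_add⟩

end BaerSum

/-- The weakly exact structure `𝒲₁ + 𝒲₂` of Baer sums, for `𝒲₁` and `𝒲₂` with a common upper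
bound `𝒱`; its pairs do not depend on `𝒱`. -/
def WeaklyExactStructure.add (h₁ : 𝒲₁ ≤ 𝒱) (h₂ : 𝒲₂ ≤ 𝒱) : WeaklyExactStructure C where
  W _ _ _ i d := IsBaerSum 𝒲₁ 𝒲₂ i d
  kc_of_mem h := 𝒱.kc_of_mem (mem_of_isBaerSum h₁ h₂ h)
  iso_closed h φ := h.of_pairIso h₁ h₂ φ
  sum_mem h h' := h.biprod_map h₁ h₂ h'
  id_zero_mem X := isBaerSum_of_mem_left h₁ h₂ (𝒲₁.id_zero_mem X)
  zero_id_mem X := isBaerSum_of_mem_left h₁ h₂ (𝒲₁.zero_id_mem X)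
  pushout_mem h a :=
    let ⟨S, g, j, e, sq, hη, k⟩ := exists_isPushout (mem_of_isBaerSum h₁ h₂ h) a
    ⟨S, g, j, sq, _, e, h.of_pairHom_left h₁ h₂ hη k⟩
  pullback_mem h c :=
    let ⟨P, p, j, e, sq, hη, k⟩ := exists_isPullback (mem_of_isBaerSum h₁ h₂ h) c
    ⟨P, p, e, sq, _, j, h.of_pairHom_right h₁ h₂ hη k⟩

end BaerSums

/-- For weakly exact structures `𝒲₁, 𝒲₂` contained in a weakly exact structure `𝒱`, the
class `𝒲₁ + 𝒲₂` of kernel–cokernel pairs isomorphic to Baer sums of a pair of `𝒲₁` and a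
pair of `𝒲₂` is a weakly exact structure, and it is the join of `𝒲₁` and `𝒲₂`. -/
theorem statement12 (𝒱 𝒲₁ 𝒲₂ : WeaklyExactStructure C)
    (h₁ : ∀ {A B Z : C} (i : A ⟶ B) (d : B ⟶ Z), 𝒲₁.W i d → 𝒱.W i d)
    (h₂ : ∀ {A B Z : C} (i : A ⟶ B) (d : B ⟶ Z), 𝒲₂.W i d → 𝒱.W i d) :
    ∃ 𝒲 : WeaklyExactStructure C,
      (∀ {A B Z : C} (i : A ⟶ B) (d : B ⟶ Z), 𝒲.W i d ↔
        (IsKernelCokernelPair i d ∧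
          ∃ (A' S' Z' : C) (i₃ : A' ⟶ S') (d₃ : S' ⟶ Z'),
            IsBaerSum 𝒲₁ 𝒲₂ i₃ d₃ ∧ PairIso i₃ d₃ i d)) ∧
      (∀ {A B Z : C} (i : A ⟶ B) (d : B ⟶ Z), 𝒲₁.W i d → 𝒲.W i d) ∧
      (∀ {A B Z : C} (i : A ⟶ B) (d : B ⟶ Z), 𝒲₂.W i d → 𝒲.W i d) ∧
      (∀ 𝒰 : WeaklyExactStructure C,
        (∀ {A B Z : C} (i : A ⟶ B) (d : B ⟶ Z), 𝒲₁.W i d → 𝒰.W i d) →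
        (∀ {A B Z : C} (i : A ⟶ B) (d : B ⟶ Z), 𝒲₂.W i d → 𝒰.W i d) →
        ∀ {A B Z : C} (i : A ⟶ B) (d : B ⟶ Z), 𝒲.W i d → 𝒰.W i d) := by
  have le₁ : 𝒲₁ ≤ 𝒱 := fun _ _ _ => h₁
  have le₂ : 𝒲₂ ≤ 𝒱 := fun _ _ _ => h₂
  refine ⟨WeaklyExactStructure.add le₁ le₂, fun i d => ⟨fun h => ?_, ?_⟩,
    fun _ _ => isBaerSum_of_mem_left le₁ le₂, fun _ _ => isBaerSum_of_mem_right le₁ le₂, ?_⟩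
  · have kc := 𝒱.kc_of_mem (mem_of_isBaerSum le₁ le₂ h)
    exact ⟨kc, _, _, _, i, d, h, Iso.refl _, Iso.refl _, Iso.refl _, by simp, by simp⟩
  · rintro ⟨-, _, _, _, _, _, h, φ⟩
    exact h.of_pairIso le₁ le₂ φ
  · intro 𝒰 h₁' h₂' A B Z i d h
    exact mem_of_isBaerSum (fun _ _ _ => h₁') (fun _ _ _ => h₂') h

end Statement

end WeaklyExactPaper
end

section
/- Let 𝒲 be a weakly exact structure on an additive category 𝒜. Then every admissible monic of 𝒲 is a semi-stable kernel and every admissible epic of 𝒲 is a semi-stable cokernel; consequently every pair in 𝒲 is a stable short exact sequence, so 𝒲 is contained in the class 𝓔_sta of stable short exact sequences of 𝒜. -/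
/-!
Pushouts are unique up to isomorphism, and being a kernel depends only on the isomorphism class of
an arrow. Hence, to see that `f` is a semi-stable kernel, it suffices to exhibit for each `t` one
pushout of `f` along `t` whose leg opposite `f` is a kernel. For an admissible monic, axiom (E2)
provides such a pushout; the cokernel half is dual.
-/

open CategoryTheory CategoryTheory.Limits ZeroObject

universe w v u

namespace WeaklyExactPaper

section Statement

variable {C : Type u} [Category.{v} C] [Preadditive C] [HasZeroObject C] [HasBinaryBiproducts C]

/-- `f` is a semi-stable kernel: `f` is a kernel and for every pushout square of `f` along any
morphism, the morphism opposite `f` is again a kernel. -/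
def SemiStableKernel {A B : C} (f : A ⟶ B) : Prop :=
  IsSomeKernel f ∧ ∀ {C' S : C} (t : A ⟶ C') (sB : B ⟶ S) (sC : C' ⟶ S),
    IsPushout f t sB sC → IsSomeKernel sC

/-- `g` is a semi-stable cokernel: `g` is a cokernel and for every pullback square of `g`
along any morphism, the morphism opposite `g` is again a cokernel. -/
def SemiStableCokernel {B Z : C} (g : B ⟶ Z) : Prop :=
  IsSomeCokernel g ∧ ∀ {D P : C} (t : D ⟶ Z) (pB : P ⟶ B) (pD : P ⟶ D),
    IsPullback pB pD g t → IsSomeCokernel pD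

section

variable {𝒜 : Type u} [Category.{v} 𝒜] [Preadditive 𝒜]

theorem isSomeKernel_iff_nonempty_normalMono {A B : 𝒜} {f : A ⟶ B} :
    IsSomeKernel f ↔ Nonempty (NormalMono f) :=
  ⟨fun ⟨Z, g, w, ⟨hf⟩⟩ ↦ ⟨⟨Z, g, w, hf⟩⟩, fun ⟨⟨Z, g, w, hf⟩⟩ ↦ ⟨Z, g, w, ⟨hf⟩⟩⟩

theorem isSomeCokernel_iff_nonempty_normalEpi {B Z : 𝒜} {g : B ⟶ Z} :
    IsSomeCokernel g ↔ Nonempty (NormalEpi g) :=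
  ⟨fun ⟨A, f, w, ⟨hg⟩⟩ ↦ ⟨⟨A, f, w, hg⟩⟩, fun ⟨⟨A, f, w, hg⟩⟩ ↦ ⟨A, f, w, ⟨hg⟩⟩⟩

theorem IsSomeKernel.of_arrow_iso {A B A' B' : 𝒜} {f : A ⟶ B} {f' : A' ⟶ B'}
    (hf : IsSomeKernel f) (e : Arrow.mk f ≅ Arrow.mk f') : IsSomeKernel f' := by
  rw [isSomeKernel_iff_nonempty_normalMono] at hf ⊢
  exact hf.map fun hf ↦ hf.ofArrowIso e

theorem IsSomeCokernel.of_arrow_iso {B Z B' Z' : 𝒜} {g : B ⟶ Z} {g' : B' ⟶ Z'}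
    (hg : IsSomeCokernel g) (e : Arrow.mk g ≅ Arrow.mk g') : IsSomeCokernel g' := by
  rw [isSomeCokernel_iff_nonempty_normalEpi] at hg ⊢
  exact hg.map fun hg ↦ hg.ofArrowIso e

theorem IsSomeKernel.of_isPushout {A B A' S S' : 𝒜} {f : A ⟶ B} {t : A ⟶ A'}
    {s : B ⟶ S} {f' : A' ⟶ S} {s' : B ⟶ S'} {f'' : A' ⟶ S'} (hf' : IsSomeKernel f')
    (sq : IsPushout f t s f') (sq' : IsPushout f t s' f'') : IsSomeKernel f'' :=
  hf'.of_arrow_iso (Arrow.isoMk (Iso.refl _) (sq.isoIsPushout _ _ sq') (by simp))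

theorem IsSomeCokernel.of_isPullback {B Z D P P' : 𝒜} {g : B ⟶ Z} {t : D ⟶ Z}
    {p : P ⟶ B} {g' : P ⟶ D} {p' : P' ⟶ B} {g'' : P' ⟶ D} (hg' : IsSomeCokernel g')
    (sq : IsPullback p g' g t) (sq' : IsPullback p' g'' g t) : IsSomeCokernel g'' :=
  hg'.of_arrow_iso (Arrow.isoMk (sq.isoIsPullback _ _ sq') (Iso.refl _) (by simp))

theorem semiStableKernel_of_exists_isPushout {A B : 𝒜} {f : A ⟶ B}
    (hf : ∀ {A' : 𝒜} (t : A ⟶ A'),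
      ∃ (S : 𝒜) (s : B ⟶ S) (f' : A' ⟶ S), IsPushout f t s f' ∧ IsSomeKernel f') :
    SemiStableKernel f := by
  have opposite_isSomeKernel {A' S : 𝒜} (t : A ⟶ A') (s : B ⟶ S) (f' : A' ⟶ S)
      (sq : IsPushout f t s f') : IsSomeKernel f' := by
    obtain ⟨_, _, _, sq', hf'⟩ := hf t
    exact hf'.of_isPushout sq' sq
  exact ⟨opposite_isSomeKernel _ _ _ .of_id_snd, opposite_isSomeKernel⟩

theorem semiStableCokernel_of_exists_isPullback {B Z : 𝒜} {g : B ⟶ Z}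
    (hg : ∀ {D : 𝒜} (t : D ⟶ Z),
      ∃ (P : 𝒜) (p : P ⟶ B) (g' : P ⟶ D), IsPullback p g' g t ∧ IsSomeCokernel g') :
    SemiStableCokernel g := by
  have opposite_isSomeCokernel {D P : 𝒜} (t : D ⟶ Z) (p : P ⟶ B) (g' : P ⟶ D)
      (sq : IsPullback p g' g t) : IsSomeCokernel g' := by
    obtain ⟨_, _, _, sq', hg'⟩ := hg t
    exact hg'.of_isPullback sq' sq
  exact ⟨opposite_isSomeCokernel _ _ _ .of_id_fst, opposite_isSomeCokernel⟩

theorem IsKernelCokernelPair.isSomeKernel {A B Z : 𝒜} {i : A ⟶ B} {d : B ⟶ Z}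
    (h : IsKernelCokernelPair i d) : IsSomeKernel i :=
  ⟨Z, d, h.w, h.isKernel⟩

theorem IsKernelCokernelPair.isSomeCokernel {A B Z : 𝒜} {i : A ⟶ B} {d : B ⟶ Z}
    (h : IsKernelCokernelPair i d) : IsSomeCokernel d :=
  ⟨A, i, h.w, h.isCokernel⟩

theorem statement14_general {W : ∀ ⦃A B Z : 𝒜⦄, (A ⟶ B) → (B ⟶ Z) → Prop}
    (kc_of_mem : ∀ {A B Z : 𝒜} {i : A ⟶ B} {d : B ⟶ Z}, W i d → IsKernelCokernelPair i d)
    (pushout_mem : ∀ {A B Z A' : 𝒜} {i : A ⟶ B} {d : B ⟶ Z}, W i d → ∀ t : A ⟶ A',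
      ∃ (S : 𝒜) (g : B ⟶ S) (i' : A' ⟶ S),
        IsPushout i t g i' ∧ ∃ (Z' : 𝒜) (d' : S ⟶ Z'), W i' d')
    (pullback_mem : ∀ {A B Z D : 𝒜} {i : A ⟶ B} {d : B ⟶ Z}, W i d → ∀ t : D ⟶ Z,
      ∃ (P : 𝒜) (p : P ⟶ B) (q : P ⟶ D),
        IsPullback p q d t ∧ ∃ (A'' : 𝒜) (i'' : A'' ⟶ P), W i'' q)
    {A B Z : 𝒜} {i : A ⟶ B} {d : B ⟶ Z} (h : W i d) :
    IsKernelCokernelPair i d ∧ SemiStableKernel i ∧ SemiStableCokernel d := by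
  refine ⟨kc_of_mem h, semiStableKernel_of_exists_isPushout fun t ↦ ?_,
    semiStableCokernel_of_exists_isPullback fun t ↦ ?_⟩
  · obtain ⟨S, g, i', sq, _, _, h'⟩ := pushout_mem h t
    exact ⟨S, g, i', sq, (kc_of_mem h').isSomeKernel⟩
  · obtain ⟨P, p, q, sq, _, _, h'⟩ := pullback_mem h t
    exact ⟨P, p, q, sq, (kc_of_mem h').isSomeCokernel⟩

end

/-- Every pair of a weakly exact structure is a stable short exact sequence: its admissible
monic is a semi-stable kernel and its admissible epic is a semi-stable cokernel. Hence any
weakly exact structure is contained in the class of stable short exact sequences. -/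
theorem statement14 (𝒲 : WeaklyExactStructure C) {A B Z : C} {i : A ⟶ B} {d : B ⟶ Z}
    (h : 𝒲.W i d) :
    IsKernelCokernelPair i d ∧ SemiStableKernel i ∧ SemiStableCokernel d :=
  statement14_general 𝒲.kc_of_mem 𝒲.pushout_mem 𝒲.pullback_mem h

end Statement

end WeaklyExactPaper
end

section
/- Let 𝒜 be an essentially small additive category with a weakly exact structure 𝒲, and let Mod 𝒜 denote the abelian category of additive functors 𝒜ᵒᵖ ⥤ Ab. Then the class of weakly effaceable functors (with respect to 𝒲) is closed under subquotients and finite direct sums in Mod 𝒜: any subobject of a weakly effaceable functor is weakly effaceable, any quotient object of a weakly effaceable functor is weakly effaceable, and the direct sum of two weakly effaceable functors is weakly effaceable. -/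
open CategoryTheory CategoryTheory.Limits ZeroObject

universe w v u

namespace WeaklyExactPaper

section Statement

variable {C : Type u} [SmallCategory C] [Preadditive C] [HasZeroObject C] [HasBinaryBiproducts C]

/-- `F` is weakly effaceable with respect to `𝒲`: every element `z ∈ F(Z)` is killed by
pulling back along some admissible epic (deflation) of `𝒲`. -/
def WeaklyEffaceable (𝒲 : WeaklyExactStructure C) (F : Cᵒᵖ ⥤ AddCommGrpCat.{u}) : Prop :=
  ∀ (Z : C) (z : F.obj (Opposite.op Z)), ∃ (Y : C) (g : Y ⟶ Z),
    AdmissibleEpic 𝒲 g ∧ F.map g.op z = 0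

/-!
Subobjects and quotients inherit effaceability because a map of modules is injective or surjective
at every object, and commutes with restriction along a deflation. For direct sums, deflations
`g₁ : Y₁ ⟶ Z` and `g₂ : Y₂ ⟶ Z` killing the two components of an element over `Z` have to be
replaced by a single one. The pullback of `g₁ ⊞ g₂` along the diagonal `Z ⟶ Z ⊞ Z` is a deflation
factoring through both.
-/

section Effaceable

variable {D : Type u} [Category.{v} D] {P : MorphismProperty D}

/-- The presheaves of abelian groups each of whose sections vanishes after restriction along some
morphism of the class `P`. When `P` consists of the admissible epics of `𝒲`, this unfolds to
`WeaklyEffaceable 𝒲`. -/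
def effaceable (P : MorphismProperty D) : ObjectProperty (Dᵒᵖ ⥤ AddCommGrpCat.{w}) :=
  fun F ↦ ∀ (Z : D) (z : F.obj (.op Z)), ∃ (Y : D) (g : Y ⟶ Z), P g ∧ F.map g.op z = 0

/-- Any two morphisms of the class `P` with the same target are refined by a single morphism of
`P`, that is, some member of `P` factors through both; the factorizations need not lie in `P`. -/
def HasCommonRefinements (P : MorphismProperty D) : Prop :=
  ∀ ⦃Y₁ Y₂ Z : D⦄ ⦃g₁ : Y₁ ⟶ Z⦄ ⦃g₂ : Y₂ ⟶ Z⦄, P g₁ → P g₂ →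
    ∃ (Y : D) (g : Y ⟶ Z), P g ∧ (∃ h₁ : Y ⟶ Y₁, h₁ ≫ g₁ = g) ∧ ∃ h₂ : Y ⟶ Y₂, h₂ ≫ g₂ = g

instance effaceable_isClosedUnderSubobjects :
    (effaceable.{w} P).IsClosedUnderSubobjects where
  prop_of_mono {G F} φ _ hF Z z := by
    obtain ⟨Y, g, hg, hgz⟩ := hF Z (φ.app _ z)
    have φ_injective : Function.Injective (φ.app (.op Y)) :=
      (AddCommGrpCat.mono_iff_injective _).1 inferInstance
    refine ⟨Y, g, hg, φ_injective ?_⟩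
    rw [NatTrans.naturality_apply, hgz, map_zero]

instance effaceable_isClosedUnderQuotients :
    (effaceable.{w} P).IsClosedUnderQuotients where
  prop_of_epi {F G} φ _ hF Z z := by
    obtain ⟨x, rfl⟩ : ∃ x, φ.app (.op Z) x = z :=
      (AddCommGrpCat.epi_iff_surjective _).1 inferInstance z
    obtain ⟨Y, g, hg, hgx⟩ := hF Z x
    refine ⟨Y, g, hg, ?_⟩
    rw [← NatTrans.naturality_apply, hgx, map_zero]

lemma map_op_eq_zero_of_comp_eq {F : Dᵒᵖ ⥤ AddCommGrpCat.{w}} {X Y Z : D} {z : F.obj (.op Z)}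
    {g : Y ⟶ Z} {f : X ⟶ Z} (hgz : F.map g.op z = 0) (hf : ∃ h : X ⟶ Y, h ≫ g = f) :
    F.map f.op z = 0 := by
  obtain ⟨h, rfl⟩ := hf
  rw [op_comp, F.map_comp, ConcreteCategory.comp_apply, hgz, map_zero]

lemma eq_zero_of_biprod_fst_snd_app_eq_zero {F G : D ⥤ AddCommGrpCat.{w}} {X : D}
    {x : (F ⊞ G).obj X} (hfst : (biprod.fst : F ⊞ G ⟶ F).app X x = 0)
    (hsnd : (biprod.snd : F ⊞ G ⟶ G).app X x = 0) : x = 0 := by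
  have total_app := ConcreteCategory.congr_hom
    (NatTrans.congr_app (biprod.total (X := F) (Y := G)) X) x
  simp only [NatTrans.app_add, NatTrans.comp_app, NatTrans.id_app, AddCommGrpCat.hom_add_apply,
    ConcreteCategory.comp_apply, ConcreteCategory.id_apply, hfst, hsnd, map_zero,
    add_zero] at total_app
  exact total_app.symm

lemma effaceable_biprod (hP : HasCommonRefinements P) {F G : Dᵒᵖ ⥤ AddCommGrpCat.{w}}
    (hF : effaceable P F) (hG : effaceable P G) : effaceable P (F ⊞ G) := by
  intro Z z
  obtain ⟨Y₁, g₁, hg₁, hgz₁⟩ := hF Z ((biprod.fst : F ⊞ G ⟶ F).app _ z)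
  obtain ⟨Y₂, g₂, hg₂, hgz₂⟩ := hG Z ((biprod.snd : F ⊞ G ⟶ G).app _ z)
  obtain ⟨Y, g, hg, hgg₁, hgg₂⟩ := hP hg₁ hg₂
  refine ⟨Y, g, hg, eq_zero_of_biprod_fst_snd_app_eq_zero ?_ ?_⟩
  · rw [NatTrans.naturality_apply, map_op_eq_zero_of_comp_eq hgz₁ hgg₁]
  · rw [NatTrans.naturality_apply, map_op_eq_zero_of_comp_eq hgz₂ hgg₂]

theorem statement15_general (hP : HasCommonRefinements P) :
    (effaceable.{w} P).IsClosedUnderSubobjects ∧ (effaceable.{w} P).IsClosedUnderQuotients ∧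
      ∀ F G : Dᵒᵖ ⥤ AddCommGrpCat.{w},
        effaceable P F → effaceable P G → effaceable P (F ⊞ G) :=
  ⟨inferInstance, inferInstance, fun _ _ ↦ effaceable_biprod hP⟩

end Effaceable

section AdmissibleEpics

variable {D : Type u} [Category.{v} D] [Preadditive D] [HasZeroObject D] [HasBinaryBiproducts D]

/-- The admissible epics of `𝒲`, bundled as a class of morphisms. -/
def admissibleEpics (𝒲 : WeaklyExactStructure D) : MorphismProperty D :=
  fun _ _ d ↦ AdmissibleEpic 𝒲 d

lemma hasCommonRefinements_admissibleEpics (𝒲 : WeaklyExactStructure D) :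
    HasCommonRefinements (admissibleEpics 𝒲) := by
  rintro Y₁ Y₂ Z g₁ g₂ ⟨A₁, i₁, h₁⟩ ⟨A₂, i₂, h₂⟩
  obtain ⟨Y, p, g, hpb, hg⟩ :=
    𝒲.pullback_mem (𝒲.sum_mem h₁ h₂) (biprod.lift (𝟙 Z) (𝟙 Z))
  refine ⟨Y, g, hg, ⟨p ≫ biprod.fst, ?_⟩, ⟨p ≫ biprod.snd, ?_⟩⟩
  · simpa using hpb.w =≫ biprod.fst
  · simpa using hpb.w =≫ biprod.snd

end AdmissibleEpics

/-- The weakly effaceable right `𝒜`-modules are closed under subobjects, quotient objects and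
finite direct sums in `Mod 𝒜`. -/
theorem statement15 (𝒲 : WeaklyExactStructure C) :
    (∀ (F G : Cᵒᵖ ⥤ AddCommGrpCat.{u}) (φ : G ⟶ F), Mono φ → F.Additive → G.Additive →
      WeaklyEffaceable 𝒲 F → WeaklyEffaceable 𝒲 G) ∧
    (∀ (F G : Cᵒᵖ ⥤ AddCommGrpCat.{u}) (φ : F ⟶ G), Epi φ → F.Additive → G.Additive →
      WeaklyEffaceable 𝒲 F → WeaklyEffaceable 𝒲 G) ∧
    (∀ F G : Cᵒᵖ ⥤ AddCommGrpCat.{u}, F.Additive → G.Additive →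
      WeaklyEffaceable 𝒲 F → WeaklyEffaceable 𝒲 G → WeaklyEffaceable 𝒲 (F ⊞ G)) := by
  obtain ⟨hsub, hquot, hsum⟩ := statement15_general (hasCommonRefinements_admissibleEpics 𝒲)
  exact ⟨fun _ _ φ _ _ _ ↦ hsub.prop_of_mono φ, fun _ _ φ _ _ _ ↦ hquot.prop_of_epi φ,
    fun F G _ _ ↦ hsum F G⟩

end Statement

end WeaklyExactPaper
end

section
/- Let 𝒜 be an essentially small additive category with a weakly exact structure 𝒲, and let Mod 𝒜 denote the abelian category of additive functors 𝒜ᵒᵖ ⥤ Ab. If φ : F ⟶ F' is a morphism in Mod 𝒜 where F and F' are each isomorphic to the contravariant defect of a pair in 𝒲, then both the kernel of φ and the cokernel of φ in Mod 𝒜 are again isomorphic to the contravariant defect of some pair in 𝒲. In other words, the category of defects of 𝒲 is closed under kernels and cokernels in Mod 𝒜. -/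
open CategoryTheory CategoryTheory.Limits ZeroObject

universe w v u

namespace WeaklyExactPaper

section Statement

variable {C : Type u} [SmallCategory C] [Preadditive C] [HasZeroObject C] [HasBinaryBiproducts C]

/-- `F` is (isomorphic to) the contravariant defect of a pair of `𝒲`, i.e. the cokernel in
`Mod 𝒜` of the map `Hom(−, B) ⟶ Hom(−, Z)` induced by the deflation of the pair. -/
def IsDefect (𝒲 : WeaklyExactStructure C) (F : Cᵒᵖ ⥤ AddCommGrpCat.{u}) : Prop :=
  ∃ (A B Z : C) (i : A ⟶ B) (d : B ⟶ Z), 𝒲.W i d ∧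
    Nonempty (F ≅ cokernel (preadditiveYoneda.map d))

section HasZeroMorphisms

variable {𝒞 : Type*} [Category* 𝒞] [HasZeroMorphisms 𝒞]

theorem nonempty_isLimit_kernelFork_isPullback_lift {A B Z P D : 𝒞} {i : A ⟶ B} {d : B ⟶ Z}
    {w : i ≫ d = 0} (hi : IsLimit (KernelFork.ofι i w)) {f : D ⟶ Z} {p : P ⟶ B} {q : P ⟶ D}
    (hP : IsPullback p q d f) :
    Nonempty (IsLimit (KernelFork.ofι (hP.lift i 0 (by simp [w])) (hP.lift_snd i 0 _))) := by
  have : Mono i := mono_of_isLimit_fork hi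
  have : Mono (hP.lift i 0 (by simp [w])) := mono_of_mono_fac (hP.lift_fst i 0 _)
  refine ⟨KernelFork.IsLimit.ofι' _ _ fun k hk => ?_⟩
  have hkp : (k ≫ p) ≫ d = 0 := by rw [Category.assoc, hP.w, reassoc_of% hk, zero_comp]
  obtain ⟨l, hl⟩ := KernelFork.IsLimit.lift' hi (k ≫ p) hkp
  exact ⟨l, hP.hom_ext (by simpa using hl) (by simp [hk])⟩

theorem isPushout_of_isPullback_of_isColimit {A B Z P D : 𝒞} {i : A ⟶ B} {d : B ⟶ Z}
    {w : i ≫ d = 0} (hd : IsColimit (CokernelCofork.ofπ d w)) {f : D ⟶ Z} {p : P ⟶ B}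
    {q : P ⟶ D} [Epi q] (hP : IsPullback p q d f) : IsPushout p q d f := by
  have : Epi d := epi_of_isColimit_cofork hd
  refine .mk' hP.w (fun T m n hm _ => (cancel_epi d).1 hm) fun T a b hab => ?_
  have ha : i ≫ a = 0 := by
    rw [← hP.lift_fst i 0 (by simp [w]), Category.assoc, hab, hP.lift_snd_assoc, zero_comp]
  obtain ⟨(l : Z ⟶ T), (hl : d ≫ l = a)⟩ := CokernelCofork.IsColimit.desc' hd a ha
  exact ⟨l, hl, by rw [← cancel_epi q, ← hP.w_assoc, hl, hab]⟩

theorem exact_kernelLift_of_exact {X₁ X₂ Y Y' : 𝒞} {f : X₁ ⟶ X₂} {g : X₂ ⟶ Y} {w : f ≫ g = 0}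
    (hex : (ShortComplex.mk f g w).Exact) {φ : Y ⟶ Y'} [HasKernel φ] (hg : g ≫ φ = 0) :
    (ShortComplex.mk f (kernel.lift φ g hg) (by ext; simpa using w)).Exact :=
  (ShortComplex.exact_iff_of_epi_of_isIso_of_mono
    (S₁ := ShortComplex.mk f (kernel.lift φ g hg) (by ext; simpa using w))
    (S₂ := ShortComplex.mk f g w)
    { τ₁ := 𝟙 _, τ₂ := 𝟙 _, τ₃ := kernel.ι φ }).2 hex

theorem exact_map_biprodDesc {𝒟 : Type*} [Category* 𝒟] [HasZeroMorphisms 𝒟] (G : 𝒞 ⥤ 𝒟)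
    [G.PreservesZeroMorphisms] {B D Z : 𝒞} [HasBinaryBiproduct B D]
    [PreservesBinaryBiproduct B D G] {d : B ⟶ Z} {f : D ⟶ Z} {Y : 𝒟} {ψ : G.obj Z ⟶ Y}
    {w : biprod.desc (G.map d) (G.map f) ≫ ψ = 0} (hex : (ShortComplex.mk _ ψ w).Exact) :
    (ShortComplex.mk (G.map (biprod.desc d f)) ψ
      (by rw [← biprod.mapBiprod_hom_desc, Category.assoc, w, comp_zero])).Exact :=
  ShortComplex.exact_of_iso (S₁ := ShortComplex.mk _ ψ w)
    (ShortComplex.isoMk (G.mapBiprod B D).symm (Iso.refl _) (Iso.refl _)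
      (by simpa using biprod.mapBiprod_inv_map_desc G B D d f) (by simp)) hex

end HasZeroMorphisms

section Preadditive

variable {𝒞 : Type*} [Category* 𝒞] [Preadditive 𝒞]

/-- The sign is the one of `CommSq.shortComplex`. -/
theorem isPushout_biprod_inl_lift_neg {A B D P : 𝒞} [HasBinaryBiproduct B D] {j : A ⟶ P}
    {q : P ⟶ D} {w : j ≫ q = 0} (hq : IsColimit (CokernelCofork.ofπ q w)) (p : P ⟶ B) :
    IsPushout (j ≫ p) j biprod.inl (biprod.lift p (-q)) := by
  have : Epi q := epi_of_isColimit_cofork hq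
  refine .mk' (by ext <;> simp [w]) (fun T m n hinl hlift => ?_) fun T a b hab => ?_
  · ext
    · exact hinl
    · simpa [biprod.lift_eq, hinl, cancel_epi] using hlift
  · have hdiff : j ≫ (p ≫ a - b) = 0 := by
      rw [Preadditive.comp_sub, ← Category.assoc, hab, sub_self]
    obtain ⟨(l : D ⟶ T), (hl : q ≫ l = p ≫ a - b)⟩ :=
      CokernelCofork.IsColimit.desc' hq _ hdiff
    exact ⟨biprod.desc a l, by simp, by simp [biprod.lift_desc, hl]⟩

end Preadditive

section WeaklyExactStructure

variable {𝒞 : Type*} [Category* 𝒞] [Preadditive 𝒞] [HasZeroObject 𝒞] [HasBinaryBiproducts 𝒞]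
  {𝒲 : WeaklyExactStructure 𝒞}

theorem AdmissibleEpic.mem_of_isLimit {A B Z : 𝒞} {i : A ⟶ B} {d : B ⟶ Z}
    (hd : AdmissibleEpic 𝒲 d) {w : i ≫ d = 0} (hi : IsLimit (KernelFork.ofι i w)) :
    𝒲.W i d := by
  obtain ⟨A', i', h⟩ := hd
  obtain ⟨hi'⟩ := (𝒲.kc_of_mem h).isKernel
  refine 𝒲.iso_closed h
    ⟨hi'.conePointUniqueUpToIso hi, Iso.refl _, Iso.refl _, ?_, by simp⟩
  simpa using (hi'.conePointUniqueUpToIso_hom_comp hi WalkingParallelPair.zero).symm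

theorem AdmissibleMonic.mem_of_isColimit {A B Z : 𝒞} {i : A ⟶ B} {d : B ⟶ Z}
    (hi : AdmissibleMonic 𝒲 i) {w : i ≫ d = 0} (hd : IsColimit (CokernelCofork.ofπ d w)) :
    𝒲.W i d := by
  obtain ⟨Z', d', h⟩ := hi
  obtain ⟨hd'⟩ := (𝒲.kc_of_mem h).isCokernel
  refine 𝒲.iso_closed h
    ⟨Iso.refl _, Iso.refl _, hd'.coconePointUniqueUpToIso hd, by simp, ?_⟩
  simpa using hd'.comp_coconePointUniqueUpToIso_hom hd WalkingParallelPair.one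

theorem AdmissibleMonic.of_isPushout {A B A' S : 𝒞} {i : A ⟶ B} (hi : AdmissibleMonic 𝒲 i)
    {t : A ⟶ A'} {g : B ⟶ S} {i' : A' ⟶ S} (hS : IsPushout i t g i') :
    AdmissibleMonic 𝒲 i' := by
  obtain ⟨Z, d, h⟩ := hi
  obtain ⟨S₀, g₀, i₀, hS₀, Z₀, d₀, h₀⟩ := 𝒲.pushout_mem h t
  let e := hS.isoIsPushout _ _ hS₀
  exact ⟨Z₀, e.hom ≫ d₀, 𝒲.iso_closed h₀
    ⟨Iso.refl _, e.symm, Iso.refl _, by simp [e], by simp⟩⟩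

theorem WeaklyExactStructure.exists_isPullback_mem {A B Z D : 𝒞} {i : A ⟶ B} {d : B ⟶ Z}
    (h : 𝒲.W i d) (f : D ⟶ Z) :
    ∃ (P : 𝒞) (p : P ⟶ B) (q : P ⟶ D) (j : A ⟶ P),
      IsPullback p q d f ∧ 𝒲.W j q ∧ j ≫ p = i := by
  obtain ⟨P, p, q, hP, hq⟩ := 𝒲.pullback_mem h f
  obtain ⟨w, ⟨hi⟩, _⟩ := 𝒲.kc_of_mem h
  obtain ⟨hj⟩ := nonempty_isLimit_kernelFork_isPullback_lift hi hP
  exact ⟨P, p, q, _, hP, AdmissibleEpic.mem_of_isLimit hq hj, hP.lift_fst i 0 _⟩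

/-- Admissible epics need not compose, so `biprod.desc d f` is not treated as a composite of
admissible epics. Instead, for the pullback `P` of `d` along `f`, the map `P ⟶ B ⊞ D` is
a pushout of a kernel of `d`, and `biprod.desc d f` is its cokernel. -/
theorem AdmissibleEpic.biprod_desc {B Z D : 𝒞} {d : B ⟶ Z} (hd : AdmissibleEpic 𝒲 d)
    (f : D ⟶ Z) : AdmissibleEpic 𝒲 (biprod.desc d f) := by
  obtain ⟨A, i, h⟩ := hd
  obtain ⟨P, p, q, j, hP, hjq, hjp⟩ := WeaklyExactStructure.exists_isPullback_mem h f
  obtain ⟨_, _, ⟨hd⟩⟩ := 𝒲.kc_of_mem h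
  obtain ⟨_, _, ⟨hq⟩⟩ := 𝒲.kc_of_mem hjq
  have : Epi q := epi_of_isColimit_cofork hq
  have hmonic : AdmissibleMonic 𝒲 (biprod.lift p (-q)) :=
    AdmissibleMonic.of_isPushout ⟨Z, d, h⟩ (hjp ▸ isPushout_biprod_inl_lift_neg hq p)
  have hpushout : IsPushout p q d f := isPushout_of_isPullback_of_isColimit hd hP
  exact ⟨P, _, hmonic.mem_of_isColimit hpushout.isColimitCokernelCofork⟩

end WeaklyExactStructure

section Abelian

variable {𝓐 : Type*} [Category* 𝓐] [Abelian 𝓐]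

theorem exact_of_isPullback {X₁ X₂ X₃ Y P : 𝓐} {f : X₁ ⟶ X₂} {g : X₂ ⟶ X₃} {w : f ≫ g = 0}
    (hex : (ShortComplex.mk f g w).Exact) {h : Y ⟶ X₂} {p : P ⟶ X₁} {q : P ⟶ Y}
    (hP : IsPullback p q f h) :
    (ShortComplex.mk q (h ≫ g) (by rw [← hP.w_assoc, w, comp_zero])).Exact := by
  rw [ShortComplex.exact_iff_exact_up_to_refinements]
  intro T y hy
  obtain ⟨T', r, hr, x, hx⟩ := hex.exact_up_to_refinements (y ≫ h) (by simpa using hy)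
  obtain ⟨z, -, hz⟩ := hP.exists_lift x (r ≫ y) (by simpa using hx.symm)
  exact ⟨T', r, hr, z, hz.symm⟩

theorem epi_kernelLift_of_exact_comp {X Z Y Y' : 𝓐} {q : X ⟶ Z} {π : Z ⟶ Y} [Epi π]
    {φ : Y ⟶ Y'} {w : q ≫ π ≫ φ = 0} (hex : (ShortComplex.mk q (π ≫ φ) w).Exact) :
    Epi (kernel.lift φ (q ≫ π) (by rw [Category.assoc, w])) := by
  rw [epi_iff_surjective_up_to_refinements]
  intro T y
  obtain ⟨T₁, r₁, _, z, hz⟩ := surjective_up_to_refinements_of_epi π (y ≫ kernel.ι φ)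
  obtain ⟨T₂, r₂, _, x, hx⟩ := hex.exact_up_to_refinements z (by simp [← reassoc_of% hz])
  refine ⟨T₂, r₂ ≫ r₁, inferInstance, x, ?_⟩
  ext
  simp [hz, reassoc_of% hx]

theorem exact_biprodDesc_comp_cokernel_π {X' Z Z' Y Y' : 𝓐} {π : Z ⟶ Y} [Epi π]
    {d' : X' ⟶ Z'} {π' : Z' ⟶ Y'} {w : d' ≫ π' = 0} (hex : (ShortComplex.mk d' π' w).Exact)
    {f : Z ⟶ Z'} {φ : Y ⟶ Y'} (hf : f ≫ π' = π ≫ φ) :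
    (ShortComplex.mk (biprod.desc d' f) (π' ≫ cokernel.π φ)
      (by ext <;> simp [reassoc_of% w, reassoc_of% hf])).Exact := by
  rw [ShortComplex.exact_iff_exact_up_to_refinements]
  intro T (x : T ⟶ Z') hx
  obtain ⟨T₁, r₁, _, (y : T₁ ⟶ Y), (hy : r₁ ≫ x ≫ π' = y ≫ φ)⟩ :=
    (ShortComplex.exact_cokernel φ).exact_up_to_refinements (x ≫ π') (by simpa using hx)
  obtain ⟨T₂, r₂, _, z, hz⟩ := surjective_up_to_refinements_of_epi π y
  have hdiff : (r₂ ≫ r₁ ≫ x - z ≫ f) ≫ π' = 0 := by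
    rw [Preadditive.sub_comp, sub_eq_zero]
    calc (r₂ ≫ r₁ ≫ x) ≫ π' = r₂ ≫ r₁ ≫ x ≫ π' := by simp only [Category.assoc]
      _ = r₂ ≫ y ≫ φ := by rw [hy]
      _ = z ≫ π ≫ φ := by rw [← Category.assoc, hz, Category.assoc]
      _ = (z ≫ f) ≫ π' := by rw [Category.assoc, hf]
  obtain ⟨T₃, r₃, _, b, hb⟩ := hex.exact_up_to_refinements _ hdiff
  refine ⟨T₃, r₃ ≫ r₂ ≫ r₁, inferInstance, biprod.lift b (r₃ ≫ z), ?_⟩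
  simp [biprod.lift_desc, ← hb]

end Abelian

section Yoneda

variable {𝒞 : Type u} [Category.{v} 𝒞] [Preadditive 𝒞]

instance additive_preadditiveYoneda : (preadditiveYoneda (C := 𝒞)).Additive where
  map_add {X Y f g} := by
    ext T (h : T.unop ⟶ X)
    exact Preadditive.comp_add _ _ _ h f g

theorem isPullback_preadditiveYoneda_map {P X Y Z : 𝒞} {p : P ⟶ X} {q : P ⟶ Y} {f : X ⟶ Z}
    {g : Y ⟶ Z} (hP : IsPullback p q f g) :
    IsPullback (preadditiveYoneda.map p) (preadditiveYoneda.map q) (preadditiveYoneda.map f)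
      (preadditiveYoneda.map g) :=
  .of_forall_isPullback_app fun T => hP.map (preadditiveCoyoneda.obj T)

theorem exists_preadditiveYoneda_map_comp_eq {X Y : 𝒞} {G : 𝒞ᵒᵖ ⥤ AddCommGrpCat.{v}}
    (f : preadditiveYoneda.obj X ⟶ G) (e : preadditiveYoneda.obj Y ⟶ G) [Epi e] :
    ∃ h : X ⟶ Y, preadditiveYoneda.map h ≫ e = f := by
  have hsurj : Function.Surjective (e.app (.op X)) :=
    (AddCommGrpCat.epi_iff_surjective _).1 inferInstance
  obtain ⟨(h : X ⟶ Y), hh⟩ := hsurj (f.app (.op X) (𝟙 X))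
  refine ⟨h, ?_⟩
  ext T (g : T.unop ⟶ X)
  calc e.app T (g ≫ h) = G.map g.op (e.app (.op X) h) :=
        ConcreteCategory.congr_hom (e.naturality g.op) h
    _ = G.map g.op (f.app (.op X) (𝟙 X)) := congrArg _ hh
    _ = f.app T (g ≫ 𝟙 X) := (ConcreteCategory.congr_hom (f.naturality g.op) (𝟙 X)).symm
    _ = f.app T g := by rw [Category.comp_id]

end Yoneda

theorem isDefect_iff_exists_exact {𝒲 : WeaklyExactStructure C} {F : Cᵒᵖ ⥤ AddCommGrpCat.{u}} :
    IsDefect 𝒲 F ↔ ∃ (B Z : C) (d : B ⟶ Z) (π : preadditiveYoneda.obj Z ⟶ F)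
      (w : preadditiveYoneda.map d ≫ π = 0),
      AdmissibleEpic 𝒲 d ∧ (ShortComplex.mk _ π w).Exact ∧ Epi π := by
  constructor
  · rintro ⟨A, B, Z, i, d, h, ⟨e⟩⟩
    refine ⟨B, Z, d, cokernel.π _ ≫ e.inv, by simp, ⟨A, i, h⟩, ?_, inferInstance⟩
    exact ShortComplex.exact_of_iso
      (S₁ := ShortComplex.mk _ _ (cokernel.condition (preadditiveYoneda.map d)))
      (ShortComplex.isoMk (Iso.refl _) (Iso.refl _) e.symm (by simp) (by simp))
      (ShortComplex.exact_cokernel (preadditiveYoneda.map d))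
  · rintro ⟨B, Z, d, π, w, ⟨A, i, h⟩, hex, hπ⟩
    exact ⟨A, B, Z, i, d, h, ⟨hex.gIsCokernel.coconePointUniqueUpToIso (colimit.isColimit _)⟩⟩

/-- For a lift `f : Z ⟶ Z'` of `φ`, with `P` the pullback of `d'` along `f` and `Q` the
pullback of `d` along `P ⟶ Z`, the sequence `Hom(-, Q) ⟶ Hom(-, P) ⟶ kernel φ ⟶ 0` is
exact. -/
theorem isDefect_kernel {𝒲 : WeaklyExactStructure C} {F F' : Cᵒᵖ ⥤ AddCommGrpCat.{u}}
    (hF : IsDefect 𝒲 F) (hF' : IsDefect 𝒲 F') (φ : F ⟶ F') : IsDefect 𝒲 (kernel φ) := by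
  obtain ⟨B, Z, d, π, w, ⟨A, i, h⟩, hex, _⟩ := isDefect_iff_exists_exact.1 hF
  obtain ⟨B', Z', d', π', w', ⟨A', i', h'⟩, hex', _⟩ := isDefect_iff_exists_exact.1 hF'
  obtain ⟨f, hf⟩ := exists_preadditiveYoneda_map_comp_eq (π ≫ φ) π'
  obtain ⟨P, p, q, hP, _⟩ := 𝒲.pullback_mem h' f
  obtain ⟨Q, s, r, hQ, hr⟩ := 𝒲.pullback_mem h q
  have hexP := exact_of_isPullback hex' (isPullback_preadditiveYoneda_map hP)
  have hexQ := exact_of_isPullback hex (isPullback_preadditiveYoneda_map hQ)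
  simp only [hf] at hexP
  exact isDefect_iff_exists_exact.2 ⟨Q, P, r, _, _, hr, exact_kernelLift_of_exact hexQ _,
    epi_kernelLift_of_exact_comp hexP⟩

/-- For a lift `f : Z ⟶ Z'` of `φ`, the sequence
`Hom(-, B' ⊞ Z) ⟶ Hom(-, Z') ⟶ cokernel φ ⟶ 0` is exact. -/
theorem isDefect_cokernel {𝒲 : WeaklyExactStructure C} {F F' : Cᵒᵖ ⥤ AddCommGrpCat.{u}}
    (hF : IsDefect 𝒲 F) (hF' : IsDefect 𝒲 F') (φ : F ⟶ F') : IsDefect 𝒲 (cokernel φ) := by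
  obtain ⟨B, Z, d, π, w, _, _, _⟩ := isDefect_iff_exists_exact.1 hF
  obtain ⟨B', Z', d', π', w', hd', hex', _⟩ := isDefect_iff_exists_exact.1 hF'
  obtain ⟨f, hf⟩ := exists_preadditiveYoneda_map_comp_eq (π ≫ φ) π'
  have := preservesBinaryBiproducts_of_preservesBiproducts (preadditiveYoneda (C := C))
  exact isDefect_iff_exists_exact.2 ⟨_, _, _, _, _, hd'.biprod_desc f,
    exact_map_biprodDesc _ (exact_biprodDesc_comp_cokernel_π hex' hf),
    inferInstance⟩

/-- The category of contravariant defects of a weakly exact structure is closed under kernels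
and cokernels in `Mod 𝒜`. -/
theorem statement16 (𝒲 : WeaklyExactStructure C) (F F' : Cᵒᵖ ⥤ AddCommGrpCat.{u})
    (hF : IsDefect 𝒲 F) (hF' : IsDefect 𝒲 F') (φ : F ⟶ F') :
    IsDefect 𝒲 (kernel φ) ∧ IsDefect 𝒲 (cokernel φ) :=
  ⟨isDefect_kernel hF hF' φ, isDefect_cokernel hF hF' φ⟩

end Statement

end WeaklyExactPaper
end
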